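/- Let k be an algebraically closed field and S = k[x_1,...,x_r]. Suppose D = (p_{ij}) is an 8×8 matrix with entries in S satisfying the standard conditions, and suppose moreover that either: (A) p_{ij} = 0 unless (1 ≤ i ≤ 2 and 3 ≤ j ≤ 8) or (3 ≤ i ≤ 5 and 6 ≤ j ≤ 8); or (B) p_{ij} = 0 unless (1 ≤ i ≤ 3 and 4 ≤ j ≤ 8) or (4 ≤ i ≤ 6 and 7 ≤ j ≤ 8). Then r < 2, i.e., r ≤ 1. -/

import Mathlib

open MvPolynomial

/-- The "standard conditions" on an `8 × 8` matrix `D = (p_{ij})` with entries in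
`S = k[x_1, ..., x_r]`:
(1) `D` is strictly upper triangular;
(2) `D² = 0`;
(3) every entry vanishes at the origin;
(4) for every nonzero point `a ∈ k^r` the evaluated matrix `D(a)` has rank `4`;
(5) there is a nonincreasing `8`-tuple of integers `(d_1, ..., d_8)` such that each `p_{ij}`
is homogeneous of degree `d_i - d_j + 1` (the zero polynomial being homogeneous of
any degree). -/
def StandardConditions {k : Type*} [Field k] {r : ℕ}
    (D : Matrix (Fin 8) (Fin 8) (MvPolynomial (Fin r) k)) : Prop :=
  (∀ i j : Fin 8, j ≤ i → D i j = 0) ∧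
  D * D = 0 ∧
  (∀ i j : Fin 8, eval (0 : Fin r → k) (D i j) = 0) ∧
  (∀ a : Fin r → k, a ≠ 0 → (D.map (eval a)).rank = 4) ∧
  (∃ d : Fin 8 → ℤ, Antitone d ∧
    ∀ i j : Fin 8, D i j = 0 ∨
      (0 ≤ d i - d j + 1 ∧ (D i j).IsHomogeneous (d i - d j + 1).toNat))

theorem factor_rank_one {R m n : Type*} [CommRing R] [IsDomain R] [UniqueFactorizationMonoid R]
    [Fintype m] (M : Matrix m n R) (hM : M ≠ 0)
    (h : ∀ i i' j j', M i j * M i' j' = M i j' * M i' j) :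
    ∃ (w : m → R) (t : n → R), ∀ i j, M i j = w i * t j := by
  classical
  let _ : StrongNormalizationMonoid R := UniqueFactorizationMonoid.strongNormalizationMonoid
  let _ : NormalizedGCDMonoid R := UniqueFactorizationMonoid.toNormalizedGCDMonoid R
  obtain ⟨i0, j0, h0⟩ : ∃ i j, M i j ≠ 0 := by
    by_contra hc
    push Not at hc
    exact hM (by ext i j; simpa using hc i j)
  obtain ⟨w, hw, hg⟩ := Finset.extract_gcd (s := Finset.univ) (fun i => M i j0) ⟨i0, by simp⟩
  set g := Finset.univ.gcd (fun i => M i j0)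
  have hw' : ∀ i, M i j0 = g * w i := fun i => hw i (by simp)
  have hg0 : g ≠ 0 := by
    intro hz; apply h0; rw [hw', hz, zero_mul]
  have hw0 : w i0 ≠ 0 := by
    intro hz; apply h0; rw [hw', hz, mul_zero]
  have key : ∀ i j, M i j * w i0 = w i * M i0 j := by
    intro i j
    apply mul_left_cancel₀ hg0
    have := h i i0 j j0
    rw [hw' i, hw' i0] at this
    linear_combination this
  have hdvd : ∀ j, w i0 ∣ M i0 j := by
    intro j
    have h1 : w i0 ∣ Finset.univ.gcd (fun i => w i * M i0 j) :=
      Finset.dvd_gcd fun i _ => ⟨M i j, by rw [← key, mul_comm]⟩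
    have h2 := Finset.gcd_mul_right' Finset.univ w (M i0 j)
    rw [hg, one_mul] at h2
    exact h2.dvd_iff_dvd_right.1 h1
  choose t ht using hdvd
  refine ⟨w, t, fun i j => ?_⟩
  apply mul_right_cancel₀ hw0
  rw [key, ht]; ring

theorem line_poly {k : Type*} [Field k] {r : ℕ} (f : MvPolynomial (Fin r) k) (p v : Fin r → k) :
    ∃ q : Polynomial k, ∀ t, q.eval t = eval (p + t • v) f := by
  refine ⟨aeval (fun i => Polynomial.C (p i) + Polynomial.C (v i) * Polynomial.X) f, fun t => ?_⟩
  induction f using MvPolynomial.induction_on with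
  | C a => simp
  | add f g hf hg => simp [hf, hg]
  | mul_X f i hf => simp [hf, mul_comm t]

theorem line_const {k : Type*} [Field k] [IsAlgClosed k] {r : ℕ} (f : MvPolynomial (Fin r) k)
    (p v : Fin r → k) (h : ∀ t : k, eval (p + t • v) f ≠ 0) (t s : k) :
    eval (p + t • v) f = eval (p + s • v) f := by
  obtain ⟨q, hq⟩ := line_poly f p v
  have hd : q.degree = 0 := by
    by_contra hc
    obtain ⟨x, hx⟩ := IsAlgClosed.exists_root q hc
    exact h x (by rw [← hq]; exact hx)
  rw [← hq, ← hq, Polynomial.eq_C_of_degree_eq_zero hd]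
  simp

theorem line_closed {k : Type*} [Field k] [IsAlgClosed k] {r : ℕ} (f : MvPolynomial (Fin r) k)
    (v : Fin r → k) (K : k) (h : ∀ t : k, t ≠ 0 → eval (t • v) f = K) :
    eval 0 f = K := by
  obtain ⟨q, hq⟩ := line_poly f 0 v
  have : Infinite k := IsAlgClosed.instInfinite
  have : q - Polynomial.C K = 0 := by
    apply Polynomial.eq_zero_of_infinite_isRoot
    apply Set.Infinite.mono (s := {0}ᶜ)
    · intro t ht
      simp [hq, h t ht]
    · exact (Set.finite_singleton (0:k)).infinite_compl
  have h2 := hq 0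
  rw [sub_eq_zero.1 this] at h2
  simpa using h2.symm

theorem exists_zero {k : Type*} [Field k] [IsAlgClosed k] {r : ℕ} (hr : 2 ≤ r)
    (f : MvPolynomial (Fin r) k) (h0 : eval 0 f = 0) : ∃ a, a ≠ 0 ∧ eval a f = 0 := by
  by_contra hc
  push Not at hc
  let e : Fin r → k := Pi.single ⟨0, by omega⟩ 1
  let e' : Fin r → k := Pi.single ⟨1, by omega⟩ 1
  have h1 : ∀ c t : k, c ≠ 0 → c • e + t • e' ≠ 0 := by
    intro c t hct h
    have := congrFun h ⟨0, by omega⟩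
    simp [e, e'] at this
    exact hct this
  have h2 : ∀ c t : k, c ≠ 0 → c • e' + t • e ≠ 0 := by
    intro c t hct h
    have := congrFun h ⟨1, by omega⟩
    simp [e, e'] at this
    exact hct this
  have h3 : ∀ t : k, t ≠ 0 → eval (t • e) f = eval ((1:k) • e') f := by
    intro t ht
    have A := line_const f (t • e) e' (fun s => hc _ (h1 t s ht)) 0 1
    have B := line_const f ((1:k) • e') e (fun s => hc _ (h2 1 s one_ne_zero)) t 0
    rw [add_comm] at B
    simp only [zero_smul, add_zero] at A B
    rw [A, B]
  have h4 := line_closed f e _ h3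
  rw [h0] at h4
  exact hc ((1:k) • e') (by simpa using h2 1 0 one_ne_zero) h4.symm

theorem mrank_add_le {k m n : Type*} [Field k] [Fintype m] [Fintype n] (A B : Matrix m n k) :
    (A + B).rank ≤ A.rank + B.rank := by
  classical
  unfold Matrix.rank
  rw [Matrix.mulVecLin_add]
  refine le_trans (Submodule.finrank_mono (LinearMap.range_add_le _ _)) ?_
  exact Submodule.finrank_add_le_finrank_add_finrank _ _

theorem rank_blocks {k : Type*} [Field k] (A B : Matrix (Fin 2) (Fin 3) k)
    (C : Matrix (Fin 3) (Fin 3) k) (hAC : A * C = 0)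
    (h : (Matrix.fromBlocks A B 0 C).rank = 4) : A.rank = 1 ∧ C.rank = 2 := by
  have h1 : A.rank + C.rank ≤ 3 := by
    simpa using Matrix.rank_add_rank_le_card_of_mul_eq_zero hAC
  have h2 : 4 ≤ 2 + C.rank := by
    have e : Matrix.fromBlocks A B 0 C =
        (Matrix.fromRows 1 0 : Matrix (Fin 2 ⊕ Fin 3) (Fin 2) k) * Matrix.fromCols A B +
        (Matrix.fromRows 0 1 : Matrix (Fin 2 ⊕ Fin 3) (Fin 3) k) * C *
          (Matrix.fromCols 0 1 : Matrix (Fin 3) (Fin 3 ⊕ Fin 3) k) := by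
      ext (i | i) (j | j) <;> simp [Matrix.fromRows_mul, Matrix.mul_fromCols]
    rw [← h, e]
    refine (mrank_add_le _ _).trans (add_le_add ?_ ?_)
    · exact (Matrix.rank_mul_le_left _ _).trans (Matrix.rank_le_card_width _)
    · exact (Matrix.rank_mul_le_left _ _).trans (Matrix.rank_mul_le_right _ _)
  have h3 : 4 ≤ A.rank + 3 := by
    have e : Matrix.fromBlocks A B 0 C =
        (Matrix.fromRows 1 0 : Matrix (Fin 2 ⊕ Fin 3) (Fin 2) k) * A *
          (Matrix.fromCols 1 0 : Matrix (Fin 3) (Fin 3 ⊕ Fin 3) k) +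
        (Matrix.fromRows B C) *
          (Matrix.fromCols 0 1 : Matrix (Fin 3) (Fin 3 ⊕ Fin 3) k) := by
      ext (i | i) (j | j) <;> simp [Matrix.fromRows_mul, Matrix.mul_fromCols]
    rw [← h, e]
    refine (mrank_add_le _ _).trans (add_le_add ?_ ?_)
    · exact (Matrix.rank_mul_le_left _ _).trans (Matrix.rank_mul_le_right _ _)
    · exact (Matrix.rank_mul_le_left _ _).trans (Matrix.rank_le_card_width _)
  omega

theorem minor_zero {k m n : Type*} [Field k] [Fintype m] [Fintype n] (A : Matrix m n k)
    (h : A.rank = 1) (i i' : m) (j j' : n) : A i j * A i' j' = A i j' * A i' j := by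
  have h1 := A.rank_submatrix_le ![i, i'] ![j, j']
  by_contra hc
  have h2 : IsUnit (A.submatrix ![i, i'] ![j, j']) := by
    rw [Matrix.isUnit_iff_isUnit_det, Matrix.det_fin_two, isUnit_iff_ne_zero]
    simpa [sub_eq_zero] using hc
  have h3 := Matrix.rank_of_isUnit _ h2
  rw [Fintype.card_fin] at h3
  omega

theorem det_zero_of_rank {k : Type*} [Field k] (C : Matrix (Fin 3) (Fin 3) k)
    (h : C.rank = 2) : C.det = 0 := by
  by_contra hc
  have h2 : IsUnit C := by
    rw [Matrix.isUnit_iff_isUnit_det, isUnit_iff_ne_zero]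
    exact hc
  have h3 := Matrix.rank_of_isUnit _ h2
  simp at h3
  omega

theorem adj_ne_zero {k : Type*} [Field k] (C : Matrix (Fin 3) (Fin 3) k)
    (h : C.rank = 2) : C.adjugate ≠ 0 := by
  intro ha
  have hC : C ≠ 0 := by rintro rfl; simp at h
  rw [Matrix.adjugate_fin_three] at ha
  have e := fun i j => congrFun (congrFun ha i) j
  simp [Fin.forall_fin_succ] at e
  obtain ⟨w, t, hw⟩ := factor_rank_one C hC (by
    simp only [Fin.forall_fin_succ]
    simp
    grind)
  have : C = Matrix.vecMulVec w t := by ext i j; simp [hw, Matrix.vecMulVec_apply]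
  have h2 := Matrix.rank_vecMulVec_le w t
  rw [← this] at h2
  omega

theorem adj_minors {R : Type*} [CommRing R] (C : Matrix (Fin 3) (Fin 3) R) (h : C.det = 0) :
    ∀ i i' j j', C.adjugate i j * C.adjugate i' j' = C.adjugate i j' * C.adjugate i' j := by
  rw [Matrix.det_fin_three] at h
  rw [Matrix.adjugate_fin_three]
  simp only [Fin.forall_fin_succ]
  simp
  grind

open Matrix in
theorem final_contra {k : Type*} [Field k] (A B : Matrix (Fin 2) (Fin 3) k)
    (C : Matrix (Fin 3) (Fin 3) k) (u : Fin 2 → k) (v t : Fin 3 → k)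
    (hu : u ≠ 0) (hv : v ≠ 0) (ht : t ≠ 0)
    (huA : u ᵥ* A = 0) (hCv : C *ᵥ v = 0) (htC : t ᵥ* C = 0)
    (hC : C.rank = 2) (hB : (u ᵥ* B) ⬝ᵥ v = 0) :
    (Matrix.fromBlocks A B 0 C).rank ≤ 3 := by
  obtain ⟨z, hz⟩ : ∃ z, z ᵥ* C = u ᵥ* B := by
    let φ : (Fin 3 → k) →ₗ[k] k := dotProductBilin k k v
    have hle : LinearMap.range C.vecMulLinear ≤ LinearMap.ker φ := by
      rintro _ ⟨z, rfl⟩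
      simp only [LinearMap.mem_ker, φ]
      change v ⬝ᵥ (z ᵥ* C) = 0
      rw [dotProduct_comm, ← dotProduct_mulVec, hCv, dotProduct_zero]
    have hr : Module.finrank k (LinearMap.range C.vecMulLinear) = 2 := by
      rw [← hC, ← rank_transpose, Matrix.rank, mulVecLin_transpose]
    have hφ : φ ≠ 0 := by
      intro h0
      apply hv
      ext i
      have := LinearMap.congr_fun h0 (Pi.single i 1)
      change v ⬝ᵥ _ = 0 at this
      simpa using this
    have hk : Module.finrank k (LinearMap.ker φ) = 2 := by
      have h1 := φ.finrank_range_add_finrank_ker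
      rw [LinearMap.range_eq_top.2 (LinearMap.surjective hφ)] at h1
      simp at h1
      omega
    have heq := Submodule.eq_of_le_of_finrank_eq hle (hr.trans hk.symm)
    have : u ᵥ* B ∈ LinearMap.ker φ := by
      change v ⬝ᵥ _ = 0
      rw [dotProduct_comm]; exact hB
    rw [← heq] at this
    exact this
  let N : Matrix (Fin 2) (Fin 2 ⊕ Fin 3) k := Matrix.of ![Sum.elim u (-z), Sum.elim 0 t]
  have hNM : N * Matrix.fromBlocks A B 0 C = 0 := by
    have h0 : Sum.elim u (-z) ᵥ* Matrix.fromBlocks A B 0 C = 0 := by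
      ext (j | j) <;> simp [vecMul_fromBlocks, huA, hz, neg_vecMul]
    have h1 : Sum.elim 0 t ᵥ* Matrix.fromBlocks A B 0 C = 0 := by
      ext (j | j) <;> simp [vecMul_fromBlocks, htC]
    ext i j
    fin_cases i
    · exact congrFun h0 j
    · exact congrFun h1 j
  have hN : N.rank = 2 := by
    have : LinearIndependent k N.row := by
      change LinearIndependent k ![Sum.elim u (-z), Sum.elim 0 t]
      rw [LinearIndependent.pair_iff]
      intro p q hpq
      have hp : p = 0 := by
        obtain ⟨i, hi⟩ := Function.ne_iff.1 hu
        have := congrFun hpq (Sum.inl i)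
        simp at this
        exact this.resolve_right hi
      subst hp
      obtain ⟨i, hi⟩ := Function.ne_iff.1 ht
      have := congrFun hpq (Sum.inr i)
      simp at this
      exact ⟨rfl, this.resolve_right hi⟩
    simpa using this.rank_matrix
  have := Matrix.rank_add_rank_le_card_of_mul_eq_zero hNM
  simp at this
  omega

open Matrix in
theorem core_blocks {k : Type*} [Field k] [IsAlgClosed k] {r : ℕ}
    (A B : Matrix (Fin 2) (Fin 3) (MvPolynomial (Fin r) k))
    (C : Matrix (Fin 3) (Fin 3) (MvPolynomial (Fin r) k))
    (hA0 : ∀ i j, eval 0 (A i j) = 0) (hB0 : ∀ i j, eval 0 (B i j) = 0)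
    (hC0 : ∀ i j, eval 0 (C i j) = 0) (hAC : A * C = 0)
    (hrk : ∀ a : Fin r → k, a ≠ 0 →
      (Matrix.fromBlocks (A.map (eval a)) (B.map (eval a)) 0 (C.map (eval a))).rank = 4) :
    r < 2 := by
  by_contra hr
  push Not at hr
  have : Infinite k := IsAlgClosed.instInfinite
  have hACe : ∀ a : Fin r → k, A.map (eval a) * C.map (eval a) = 0 := by
    intro a
    rw [← Matrix.map_mul, hAC]
    ext; simp
  have hrA := fun a ha => (rank_blocks _ _ _ (hACe a) (hrk a ha)).1
  have hrC := fun a ha => (rank_blocks _ _ _ (hACe a) (hrk a ha)).2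
  have hmA : ∀ i i' j j', A i j * A i' j' = A i j' * A i' j := by
    intro i i' j j'
    apply MvPolynomial.funext
    intro a
    by_cases ha : a = 0
    · subst ha; simp only [map_mul, hA0]
    · simpa using minor_zero _ (hrA a ha) i i' j j'
  have hdC : C.det = 0 := by
    apply MvPolynomial.funext
    intro a
    by_cases ha : a = 0
    · subst ha; simp only [Matrix.det_fin_three, map_add, map_sub, map_mul, hC0]; simp
    · have := det_zero_of_rank _ (hrC a ha)
      rw [← RingHom.mapMatrix_apply, ← RingHom.map_det] at this
      simpa using this
  have hadj : ∀ a : Fin r → k, (C.map (eval a)).adjugate = C.adjugate.map (eval a) := by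
    intro a
    exact (RingHom.map_adjugate (eval a) C).symm
  obtain ⟨a0, ha0⟩ : ∃ a : Fin r → k, a ≠ 0 :=
    ⟨fun _ => 1, fun h => one_ne_zero (congrFun h ⟨0, by omega⟩)⟩
  have hAne : A ≠ 0 := by
    rintro rfl
    have := hrA a0 ha0
    simp at this
  have hadjne : C.adjugate ≠ 0 := by
    intro h
    apply adj_ne_zero _ (hrC a0 ha0)
    rw [hadj, h]
    ext; simp
  obtain ⟨w, t, hwt⟩ := factor_rank_one A hAne hmA
  obtain ⟨v, s, hvs⟩ := factor_rank_one C.adjugate hadjne (adj_minors C hdC)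
  -- nonvanishing of the factors away from the origin
  have hw : ∀ a : Fin r → k, a ≠ 0 → (fun i => eval a (w i)) ≠ 0 := by
    intro a ha h
    have h1 := hrA a ha
    have : A.map (eval a) = 0 := by
      ext i j
      have := congrFun h i
      simp at this
      simp [hwt, this]
    simp [this] at h1
  have ht : ∀ a : Fin r → k, a ≠ 0 → (fun i => eval a (t i)) ≠ 0 := by
    intro a ha h
    have h1 := hrA a ha
    have : A.map (eval a) = 0 := by
      ext i j
      have := congrFun h j
      simp at this
      simp [hwt, this]
    simp [this] at h1
  have hv : ∀ a : Fin r → k, a ≠ 0 → (fun i => eval a (v i)) ≠ 0 := by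
    intro a ha h
    apply adj_ne_zero _ (hrC a ha)
    rw [hadj]
    ext i j
    have := congrFun h i
    simp at this
    simp [hvs, this]
  -- null vectors
  have hw1 : ∃ i, w i ≠ 0 := by
    by_contra hc
    push Not at hc
    exact hw a0 ha0 (by ext i; simp [hc])
  have hs1 : ∃ j, s j ≠ 0 := by
    by_contra hc
    push Not at hc
    exact hadjne (by ext i j; simp [hvs, hc])
  have htC : t ᵥ* C = 0 := by
    obtain ⟨i, hi⟩ := hw1
    ext1 j
    have h1 := congrFun (congrFun hAC i) j
    rw [Matrix.mul_apply] at h1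
    simp only [hwt, mul_assoc, ← Finset.mul_sum] at h1
    exact (mul_eq_zero.1 h1).resolve_left hi
  have hCv : C *ᵥ v = 0 := by
    obtain ⟨j, hj⟩ := hs1
    ext1 i
    have h1 := congrFun (congrFun (Matrix.mul_adjugate C) i) j
    rw [Matrix.mul_apply, hdC, zero_smul] at h1
    simp only [hvs, ← mul_assoc, ← Finset.sum_mul] at h1
    exact (mul_eq_zero.1 h1).resolve_right hj
  let u : Fin 2 → MvPolynomial (Fin r) k := ![w 1, -w 0]
  have huA : u ᵥ* A = 0 := by
    ext1 j
    simp [u, Matrix.vecMul, dotProduct, Fin.sum_univ_two, hwt]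
    ring
  obtain ⟨a, ha, hfa⟩ := exists_zero hr ((u ᵥ* B) ⬝ᵥ v) (by
    simp only [Matrix.vecMul, dotProduct, map_sum, map_mul, hB0]; simp)
  have hfin := final_contra (A.map (eval a)) (B.map (eval a)) (C.map (eval a))
    (eval a ∘ u) (eval a ∘ v) (eval a ∘ t)
    (by
      intro h
      apply hw a ha
      have e0 := congrFun h 0
      have e1 := congrFun h 1
      simp [u] at e0 e1
      ext i
      fin_cases i <;> simp [e0, e1])
    (hv a ha) (ht a ha)
    (by ext j; rw [← RingHom.map_vecMul, huA]; simp)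
    (by ext j; rw [← RingHom.map_mulVec, hCv]; simp)
    (by ext j; rw [← RingHom.map_vecMul, htC]; simp)
    (hrC a ha)
    (by
      rw [← hfa, RingHom.map_dotProduct]
      congr 1
      ext j; rw [← RingHom.map_vecMul]; rfl)
  have := hrk a ha
  omega

theorem rank_le_submatrix_row {k m n p : Type*} [Field k] [Fintype m] [DecidableEq m] [Fintype n]
    [Fintype p] (N : Matrix m n k) (f : p → m) (hf : Function.Injective f)
    (hz : ∀ i, (¬ ∃ x, f x = i) → ∀ j, N i j = 0) : N.rank ≤ (N.submatrix f id).rank := by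
  have e : N = (1 : Matrix m m k).submatrix id f * N.submatrix f id := by
    ext i j
    rw [Matrix.mul_apply]
    simp only [Matrix.submatrix_apply, id, Matrix.one_apply]
    by_cases h : ∃ x, f x = i
    · obtain ⟨x, rfl⟩ := h
      rw [Finset.sum_eq_single x]
      · simp
      · intro y _ hy
        rw [if_neg (fun h => hy (hf h).symm), zero_mul]
      · simp
    · rw [hz i h, Finset.sum_eq_zero]
      intro y _
      rw [if_neg (fun h' => h ⟨y, h'.symm⟩), zero_mul]
  conv_lhs => rw [e]
  exact Matrix.rank_mul_le_right _ _

theorem rank_le_submatrix {k m n p q : Type*} [Field k] [Fintype m] [DecidableEq m] [Fintype n]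
    [DecidableEq n] [Fintype p] [Fintype q] (N : Matrix m n k) (f : p → m) (g : q → n)
    (hf : Function.Injective f) (hg : Function.Injective g)
    (hz : ∀ i, (¬ ∃ x, f x = i) → ∀ j, N i j = 0)
    (hz' : ∀ j, (¬ ∃ x, g x = j) → ∀ i, N i j = 0) : N.rank ≤ (N.submatrix f g).rank := by
  refine (rank_le_submatrix_row N f hf hz).trans ?_
  rw [← Matrix.rank_transpose, ← Matrix.rank_transpose (N.submatrix f g)]
  exact rank_le_submatrix_row (N.submatrix f id).transpose g hg fun j hj i => hz' j hj _

theorem core8 {k : Type*} [Field k] [IsAlgClosed k] {r : ℕ}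
    (D : Matrix (Fin 8) (Fin 8) (MvPolynomial (Fin r) k))
    (hDD : D * D = 0) (h0 : ∀ i j, eval (0 : Fin r → k) (D i j) = 0)
    (hrk : ∀ a : Fin r → k, a ≠ 0 → (D.map (eval a)).rank = 4)
    (hz : ∀ i j : Fin 8, ¬(((i : ℕ) < 2 ∧ 2 ≤ (j : ℕ)) ∨
      (2 ≤ (i : ℕ) ∧ (i : ℕ) < 5 ∧ 5 ≤ (j : ℕ))) → D i j = 0) : r < 2 := by
  let f1 : Fin 2 → Fin 8 := ![0, 1]
  let f2 : Fin 3 → Fin 8 := ![2, 3, 4]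
  let f3 : Fin 3 → Fin 8 := ![5, 6, 7]
  refine core_blocks (D.submatrix f1 f2) (D.submatrix f1 f3) (D.submatrix f2 f3)
    (fun i j => h0 _ _) (fun i j => h0 _ _) (fun i j => h0 _ _) ?_ ?_
  · ext1 i j
    have h := congrFun (congrFun hDD (f1 i)) (f3 j)
    rw [Matrix.mul_apply, Fin.sum_univ_eight] at h
    rw [Matrix.mul_apply, Fin.sum_univ_three]
    have hi : (f1 i : ℕ) < 2 := by fin_cases i <;> simp [f1]
    have hj : 5 ≤ (f3 j : ℕ) := by fin_cases j <;> simp [f3]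
    rw [hz (f1 i) 0 (by simp), hz (f1 i) 1 (by simp), hz 5 (f3 j) (by simp),
      hz 6 (f3 j) (by simp), hz 7 (f3 j) (by simp)] at h
    simpa [f2] using h
  · intro a ha
    set M := Matrix.fromBlocks ((D.submatrix f1 f2).map (eval a)) ((D.submatrix f1 f3).map (eval a))
      0 ((D.submatrix f2 f3).map (eval a)) with hM
    have e1 : M = (D.map (eval a)).submatrix (Sum.elim f1 f2) (Sum.elim f2 f3) := by
      ext (i | i) (j | j)
      · rfl
      · rfl
      · have hi : 2 ≤ (f2 i : ℕ) := by fin_cases i <;> simp [f2]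
        have hj : (f2 j : ℕ) < 5 := by fin_cases j <;> simp [f2]
        simp [M, hz (f2 i) (f2 j) (by omega)]
      · rfl
    have hf : Function.Injective (Sum.elim f1 f2) := by decide
    have hg : Function.Injective (Sum.elim f2 f3) := by decide
    have hfr : ∀ i : Fin 8, (i : ℕ) < 5 → ∃ x, Sum.elim f1 f2 x = i := by decide
    have hgr : ∀ i : Fin 8, 2 ≤ (i : ℕ) → ∃ x, Sum.elim f2 f3 x = i := by decide
    apply le_antisymm
    · rw [← hrk a ha, e1]
      exact Matrix.rank_submatrix_le _ _ _
    · rw [← hrk a ha, e1]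
      refine rank_le_submatrix _ _ _ hf hg ?_ ?_
      · intro i hi j
        have : ¬ (i : ℕ) < 5 := fun h => hi (hfr i h)
        simp [hz i j (by omega)]
      · intro j hj i
        have : ¬ 2 ≤ (j : ℕ) := fun h => hj (hgr j h)
        simp [hz i j (by omega)]

theorem statement_12 {k : Type*} [Field k] [IsAlgClosed k] {r : ℕ}
    (D : Matrix (Fin 8) (Fin 8) (MvPolynomial (Fin r) k))
    (hstd : StandardConditions D)
    (hzero : (∀ i j : Fin 8,
        ¬((1 ≤ (i : ℕ) + 1 ∧ (i : ℕ) + 1 ≤ 2 ∧ 3 ≤ (j : ℕ) + 1 ∧ (j : ℕ) + 1 ≤ 8) ∨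
          (3 ≤ (i : ℕ) + 1 ∧ (i : ℕ) + 1 ≤ 5 ∧ 6 ≤ (j : ℕ) + 1 ∧ (j : ℕ) + 1 ≤ 8)) →
        D i j = 0) ∨
      (∀ i j : Fin 8,
        ¬((1 ≤ (i : ℕ) + 1 ∧ (i : ℕ) + 1 ≤ 3 ∧ 4 ≤ (j : ℕ) + 1 ∧ (j : ℕ) + 1 ≤ 8) ∨
          (4 ≤ (i : ℕ) + 1 ∧ (i : ℕ) + 1 ≤ 6 ∧ 7 ≤ (j : ℕ) + 1 ∧ (j : ℕ) + 1 ≤ 8)) →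
        D i j = 0)) :
    r < 2 := by
  obtain ⟨-, hDD, h0, hrk, -⟩ := hstd
  rcases hzero with hz | hz
  · exact core8 D hDD h0 hrk fun i j hij => hz i j (by omega)
  · refine core8 (D.transpose.submatrix Fin.rev Fin.rev) ?_ (fun i j => h0 _ _) ?_ ?_
    · have e := Matrix.submatrix_mul_equiv D.transpose D.transpose Fin.rev Fin.revPerm Fin.rev
      rw [← Matrix.transpose_mul, hDD] at e
      exact e
    · intro a ha
      rw [← hrk a ha, ← Matrix.rank_transpose (D.map (eval a))]
      exact Matrix.rank_submatrix (D.map (eval a)).transpose Fin.revPerm Fin.revPerm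
    · intro i j hij
      apply hz
      simp only [Fin.val_rev]
      omega
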